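/- Let (ρ, u) be a smooth solution of (QNS_ε) on (0,T) × T^d, let c > 0, and set v = u + c ∇(φ_ε(ρ)), κ̃² = κ² − 2νc + c², λ̃ = (μ − c)/μ. Then on (0,T) × T^d: ∂_t ρ + div(ρ v) = c Δ(h_ε(ρ)), and ∂_t(ρ v) + div(ρ v ⊗ v) + ∇(ρ^γ) + λ̃ ∇(p_ε(ρ)) − c Δ(h_ε(ρ) v) + p̃_ε(ρ) v − 2(ν − c) div(h_ε(ρ) Dv) − (2ν − c) ∇(g_ε(ρ) div v) − 2 κ̃² ρ ∇( h_ε'(ρ) div(h_ε'(ρ) ∇√ρ) / √ρ ) = 0. -/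

import Mathlib

open MeasureTheory Real

noncomputable section

/-- Partial derivative of a scalar field in the coordinate direction `i`. -/
def pd {d : ℕ} (i : Fin d) (f : (Fin d → ℝ) → ℝ) (x : Fin d → ℝ) : ℝ :=
  fderiv ℝ f x (Pi.single i 1)

/-- Gradient of a scalar field. -/
def grad {d : ℕ} (f : (Fin d → ℝ) → ℝ) (x : Fin d → ℝ) : Fin d → ℝ :=
  fun i => pd i f x

/-- Divergence of a vector field. -/
def dvg {d : ℕ} (u : (Fin d → ℝ) → (Fin d → ℝ)) (x : Fin d → ℝ) : ℝ :=
  ∑ i, pd i (fun y => u y i) x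

/-- Row-wise divergence of a matrix field: `(dvgM M x) i = ∑ j, ∂_j M_{ij}`. -/
def dvgM {d : ℕ} (M : (Fin d → ℝ) → Fin d → Fin d → ℝ) (x : Fin d → ℝ) : Fin d → ℝ :=
  fun i => ∑ j, pd j (fun y => M y i j) x

/-- Hessian of a scalar field. -/
def hess {d : ℕ} (f : (Fin d → ℝ) → ℝ) (x : Fin d → ℝ) : Fin d → Fin d → ℝ :=
  fun i j => pd i (fun y => pd j f y) x

/-- Laplacian of a scalar field. -/
def lap {d : ℕ} (f : (Fin d → ℝ) → ℝ) (x : Fin d → ℝ) : ℝ :=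
  ∑ i, pd i (fun y => pd i f y) x

/-- Jacobian matrix of a vector field: `(jac u x) i j = ∂_j u_i`. -/
def jac {d : ℕ} (u : (Fin d → ℝ) → (Fin d → ℝ)) (x : Fin d → ℝ) : Fin d → Fin d → ℝ :=
  fun i j => pd j (fun y => u y i) x

/-- Symmetric part of the gradient of a vector field, `Du = (∇u + (∇u)ᵀ)/2`. -/
def symD {d : ℕ} (u : (Fin d → ℝ) → (Fin d → ℝ)) (x : Fin d → ℝ) : Fin d → Fin d → ℝ :=
  fun i j => (jac u x i j + jac u x j i) / 2

/-- Antisymmetric part of the gradient of a vector field, `Au = (∇u − (∇u)ᵀ)/2`. -/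
def antiD {d : ℕ} (u : (Fin d → ℝ) → (Fin d → ℝ)) (x : Fin d → ℝ) : Fin d → Fin d → ℝ :=
  fun i j => (jac u x i j - jac u x j i) / 2

/-- Tensor product of two vectors: `(a ⊗ b)_{ij} = a_i b_j`. -/
def tens {d : ℕ} (a b : Fin d → ℝ) : Fin d → Fin d → ℝ := fun i j => a i * b j

/-- ℤ^d-periodicity: a function of this kind descends to the torus `T^d = ℝ^d/ℤ^d`. -/
def SpacePeriodic {d : ℕ} {E : Type*} (f : (Fin d → ℝ) → E) : Prop :=
  ∀ x : Fin d → ℝ, ∀ n : Fin d → ℤ, f (x + fun i => (n i : ℝ)) = f x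

/-- Fundamental domain of the torus `T^d = ℝ^d/ℤ^d` (with its probability Lebesgue measure). -/
def unitBox (d : ℕ) : Set (Fin d → ℝ) := Set.Icc 0 1

/-- The approximating viscosity coefficient `h_ε(r) = r + ε r^{7/8} + ε r^γ`. -/
def hfun (ε γ r : ℝ) : ℝ := r + ε * r ^ ((7 : ℝ) / 8) + ε * r ^ γ

/-- `g_ε(r) = r h_ε'(r) − h_ε(r)`. -/
def gfun (ε γ r : ℝ) : ℝ := r * deriv (hfun ε γ) r - hfun ε γ r

/-- `λ(ε) = e^{−1/ε⁴}`. -/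
def lamfun (ε : ℝ) : ℝ := Real.exp (-1 / ε ^ 4)

/-- The damping coefficient `p̃_ε(r) = λ(ε)(r^{1/ε²} + r^{−1/ε²})`. -/
def ptil (ε r : ℝ) : ℝ := lamfun ε * (r ^ (1 / ε ^ 2) + r ^ (-(1 / ε ^ 2)))

/-- `μ = ν − √(ν² − κ²)`. -/
def muof (ν κ : ℝ) : ℝ := ν - Real.sqrt (ν ^ 2 - κ ^ 2)

/-- `p_ε` is an antiderivative on `(0,∞)` of `r ↦ μ p̃_ε(r) h_ε'(r) / r`. -/
def IsPeps (ε γ ν κ : ℝ) (P : ℝ → ℝ) : Prop :=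
  ∀ r : ℝ, 0 < r → HasDerivAt P (muof ν κ * ptil ε r * deriv (hfun ε γ) r / r) r

/-- `φ_ε` is a smooth function on `(0,∞)` with `r φ_ε'(r) = h_ε'(r)`. -/
def IsPhieps (ε γ : ℝ) (Φ : ℝ → ℝ) : Prop :=
  ContDiffOn ℝ (⊤ : ℕ∞) Φ (Set.Ioi 0) ∧ ∀ r : ℝ, 0 < r → r * deriv Φ r = deriv (hfun ε γ) r

/-- `f_ε` satisfies `r f_ε'(r) − f_ε(r) = p_ε(r)` on `(0,∞)`. -/
def IsFeps (P F : ℝ → ℝ) : Prop :=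
  (∀ r : ℝ, 0 < r → DifferentiableAt ℝ F r) ∧
  ∀ r : ℝ, 0 < r → r * deriv F r - F r = P r

/-- The vector field `∇( h_ε'(ρ) div(h_ε'(ρ) ∇√ρ) / √ρ )`; the capillarity term of (QNS_ε) is
`2 κ² ρ` times this field. -/
def Kvec {d : ℕ} (ε γ : ℝ) (ρ : (Fin d → ℝ) → ℝ) (x : Fin d → ℝ) : Fin d → ℝ :=
  grad (fun y => deriv (hfun ε γ) (ρ y) *
      dvg (fun z => deriv (hfun ε γ) (ρ z) • grad (fun w => Real.sqrt (ρ w)) z) y /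
      Real.sqrt (ρ y)) x

/-- A smooth solution of the approximating system (QNS_ε) on `(0,T) × T^d`:
a pair of `C^∞` functions on `[0,T] × T^d` with `ρ > 0` everywhere, satisfying the continuity
equation and the momentum equation pointwise. -/
def IsQNSSol (d : ℕ) (ε γ ν κ T : ℝ) (P : ℝ → ℝ)
    (ρ : ℝ → (Fin d → ℝ) → ℝ) (u : ℝ → (Fin d → ℝ) → (Fin d → ℝ)) : Prop :=
  ContDiffOn ℝ (⊤ : ℕ∞) (fun p : ℝ × (Fin d → ℝ) => ρ p.1 p.2) (Set.Icc 0 T ×ˢ Set.univ) ∧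
  ContDiffOn ℝ (⊤ : ℕ∞) (fun p : ℝ × (Fin d → ℝ) => u p.1 p.2) (Set.Icc 0 T ×ˢ Set.univ) ∧
  (∀ t x, 0 < ρ t x) ∧
  (∀ t, SpacePeriodic (ρ t)) ∧
  (∀ t, SpacePeriodic (u t)) ∧
  (∀ t ∈ Set.Ioo 0 T, ∀ x : Fin d → ℝ,
    deriv (fun s => ρ s x) t + dvg (fun y => ρ t y • u t y) x = 0) ∧
  (∀ t ∈ Set.Ioo 0 T, ∀ x : Fin d → ℝ, ∀ i : Fin d,
    deriv (fun s => ρ s x * u s x i) t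
      + dvgM (fun y i' j => ρ t y * u t y i' * u t y j) x i
      + grad (fun y => ρ t y ^ γ + P (ρ t y)) x i
      + ptil ε (ρ t x) * u t x i
    = 2 * ν * dvgM (fun y i' j => hfun ε γ (ρ t y) * symD (u t) y i' j) x i
      + 2 * ν * grad (fun y => gfun ε γ (ρ t y) * dvg (u t) y) x i
      + 2 * κ ^ 2 * ρ t x * Kvec ε γ (ρ t) x i)


@[fun_prop]
theorem pd_smooth {d : ℕ} (i : Fin d) {f : (Fin d → ℝ) → ℝ}
    (hf : ContDiff ℝ (⊤ : ℕ∞) f) : ContDiff ℝ (⊤ : ℕ∞) (fun x => pd i f x) := by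
  unfold pd
  have : ContDiff ℝ (⊤ : ℕ∞) (fderiv ℝ f) := hf.fderiv_right (by simp)
  exact this.clm_apply contDiff_const

theorem smooth_da {d : ℕ} {f : (Fin d → ℝ) → ℝ}
    (hf : ContDiff ℝ (⊤ : ℕ∞) f) (x : Fin d → ℝ) : DifferentiableAt ℝ f x :=
  (hf.differentiable (by simp)) x

theorem pd_mul' {d : ℕ} (i : Fin d) {f g : (Fin d → ℝ) → ℝ} (x : Fin d → ℝ)
    (hf : ContDiff ℝ (⊤ : ℕ∞) f) (hg : ContDiff ℝ (⊤ : ℕ∞) g) :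
    pd i (fun y => f y * g y) x = pd i f x * g x + f x * pd i g x := by
  unfold pd
  rw [fderiv_fun_mul (smooth_da hf x) (smooth_da hg x)]
  simp; ring

theorem pd_lin3 {d : ℕ} (i : Fin d) {f a b k : (Fin d → ℝ) → ℝ} (p q r : ℝ) (x : Fin d → ℝ)
    (h : ∀ y, f y = p * a y + q * b y + r * k y)
    (ha : ContDiff ℝ (⊤ : ℕ∞) a) (hb : ContDiff ℝ (⊤ : ℕ∞) b) (hk : ContDiff ℝ (⊤ : ℕ∞) k) :
    pd i f x = p * pd i a x + q * pd i b x + r * pd i k x := by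
  have : f = fun y => p * a y + q * b y + r * k y := funext h
  subst this
  unfold pd
  have h1 := ((smooth_da ha x).hasFDerivAt.const_mul p)
  have h2 := ((smooth_da hb x).hasFDerivAt.const_mul q)
  have h3 := ((smooth_da hk x).hasFDerivAt.const_mul r)
  rw [((h1.fun_add h2).fun_add h3).fderiv]
  simp

theorem pd_lin2 {d : ℕ} (i : Fin d) {f a b : (Fin d → ℝ) → ℝ} (p q : ℝ) (x : Fin d → ℝ)
    (h : ∀ y, f y = p * a y + q * b y)
    (ha : ContDiff ℝ (⊤ : ℕ∞) a) (hb : ContDiff ℝ (⊤ : ℕ∞) b) :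
    pd i f x = p * pd i a x + q * pd i b x := by
  have := pd_lin3 i (f := f) (k := a) p q 0 x (by intro y; rw [h y]; ring) ha hb ha
  rw [this]; ring

theorem pd_sum' {d : ℕ} (i : Fin d) {f : Fin d → (Fin d → ℝ) → ℝ} (x : Fin d → ℝ)
    (hf : ∀ j, ContDiff ℝ (⊤ : ℕ∞) (f j)) :
    pd i (fun y => ∑ j, f j y) x = ∑ j, pd i (f j) x := by
  unfold pd
  rw [fderiv_fun_sum (fun j _ => smooth_da (hf j) x)]
  simp

theorem pd_comm {d : ℕ} (i j : Fin d) {f : (Fin d → ℝ) → ℝ} (x : Fin d → ℝ)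
    (hf : ContDiff ℝ (⊤ : ℕ∞) f) :
    pd i (fun y => pd j f y) x = pd j (fun y => pd i f y) x := by
  have hs : IsSymmSndFDerivAt ℝ f x :=
    hf.contDiffAt.isSymmSndFDerivAt (by simp; exact WithTop.coe_le_coe.2 le_top)
  have hd : DifferentiableAt ℝ (fderiv ℝ f) x :=
    ((hf.fderiv_right (m := (⊤ : ℕ∞)) (by simp)).differentiable (by simp)) x
  have key : ∀ w z : Fin d → ℝ, fderiv ℝ (fun y => fderiv ℝ f y w) x z
      = fderiv ℝ (fderiv ℝ f) x z w := by
    intro w z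
    rw [fderiv_clm_apply hd (differentiableAt_const w)]
    simp
  unfold pd
  rw [key, key]
  exact hs _ _

theorem pd_chain {d : ℕ} (i : Fin d) {f : ℝ → ℝ} {f' : ℝ} {R : (Fin d → ℝ) → ℝ}
    (x : Fin d → ℝ) (hf : HasDerivAt f f' (R x)) (hR : ContDiff ℝ (⊤ : ℕ∞) R) :
    pd i (fun y => f (R y)) x = f' * pd i R x := by
  unfold pd
  have := hf.comp_hasFDerivAt x (smooth_da hR x).hasFDerivAt
  have h2 : fderiv ℝ (fun y => f (R y)) x = f' • fderiv ℝ R x := this.fderiv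
  rw [h2]; simp

/-- swap of time and space derivatives -/
theorem time_swap {d : ℕ} (i : Fin d) {W : ℝ × (Fin d → ℝ) → ℝ} {T t : ℝ} (x : Fin d → ℝ)
    (hW : ∀ s ∈ Set.Ioo 0 T, ∀ y, ContDiffAt ℝ (⊤ : ℕ∞) W (s, y)) (ht : t ∈ Set.Ioo 0 T) :
    HasDerivAt (fun s => pd i (fun y => W (s, y)) x)
      (pd i (fun y => deriv (fun s => W (s, y)) t) x) t := by
  have hs : IsSymmSndFDerivAt ℝ W (t, x) :=
    (hW t ht x).isSymmSndFDerivAt (by simp; exact WithTop.coe_le_coe.2 le_top)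
  have hd : DifferentiableAt ℝ (fderiv ℝ W) (t, x) :=
    ((hW t ht x).fderiv_right (m := (⊤ : ℕ∞)) (by simp)).differentiableAt (by simp)
  have hWd : ∀ s ∈ Set.Ioo 0 T, ∀ y, DifferentiableAt ℝ W (s, y) := fun s hs y =>
    (hW s hs y).differentiableAt (by simp)
  have e1 : ∀ s ∈ Set.Ioo 0 T, pd i (fun y => W (s, y)) x = fderiv ℝ W (s, x) (0, Pi.single i 1) := by
    intro s hs
    unfold pd
    have h := (hWd s hs x).hasFDerivAt.comp x (hasFDerivAt_prodMk_right s x)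
    have h2 : fderiv ℝ (fun y => W (s, y)) x = _ := h.fderiv
    rw [h2]; simp
  have e2 : ∀ y, deriv (fun s => W (s, y)) t = fderiv ℝ W (t, y) (1, 0) := by
    intro y
    have hp : HasDerivAt (fun s : ℝ => (s, y)) ((1 : ℝ), (0 : Fin d → ℝ)) t :=
      (hasDerivAt_id t).prodMk (hasDerivAt_const t y)
    have h2 : HasDerivAt (fun s => W (s, y)) _ t :=
      (hWd t ht y).hasFDerivAt.comp_hasDerivAt t hp
    rw [h2.deriv]
  have r : pd i (fun y => deriv (fun s => W (s, y)) t) x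
      = fderiv ℝ (fderiv ℝ W) (t, x) (1, 0) (0, Pi.single i 1) := by
    simp_rw [e2]
    unfold pd
    have h1 := hd.hasFDerivAt.comp x (hasFDerivAt_prodMk_right t x)
    have h2 := (h1.clm_apply (hasFDerivAt_const ((1 : ℝ), (0 : Fin d → ℝ)) x))
    have h3 : fderiv ℝ (fun y => fderiv ℝ W (t, y) (1, 0)) x = _ := h2.fderiv
    rw [h3, ← hs.eq]
    simp
  rw [r]
  have hp : HasDerivAt (fun s : ℝ => (s, x)) ((1 : ℝ), (0 : Fin d → ℝ)) t :=
    (hasDerivAt_id t).prodMk (hasDerivAt_const t x)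
  have h1 : HasDerivAt (fun s => fderiv ℝ W (s, x)) (fderiv ℝ (fderiv ℝ W) (t, x) (1, 0)) t :=
    hd.hasFDerivAt.comp_hasDerivAt t hp
  have h5 : HasDerivAt (fun s => fderiv ℝ W (s, x) (0, Pi.single i 1))
      (fderiv ℝ (fderiv ℝ W) (t, x) (1, 0) (0, Pi.single i 1)) t := by
    have := h1.clm_apply (hasDerivAt_const t ((0 : ℝ), (Pi.single i 1 : Fin d → ℝ)))
    simpa using this
  refine h5.congr_of_eventuallyEq ?_
  filter_upwards [isOpen_Ioo.mem_nhds ht] with s hs using e1 s hs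

theorem L1 {d : ℕ} (i : Fin d) {R H F : (Fin d → ℝ) → ℝ} {U : Fin d → (Fin d → ℝ) → ℝ} (c : ℝ)
    (x : Fin d → ℝ) (sR : ContDiff ℝ (⊤ : ℕ∞) R) (sH : ContDiff ℝ (⊤ : ℕ∞) H)
    (sF : ContDiff ℝ (⊤ : ℕ∞) F) (sU : ∀ j, ContDiff ℝ (⊤ : ℕ∞) (U j))
    (hHF : ∀ j y, pd j H y = R y * pd j F y) :
    ∑ j, pd j (fun y => R y * (U i y + c * pd i F y) * (U j y + c * pd j F y)) x
      = ∑ j, pd j (fun y => R y * U i y * U j y) x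
        + c * ∑ j, pd j (fun y => U i y * pd j H y + pd i H y * U j y) x
        + c ^ 2 * ∑ j, pd j (fun y => R y * pd i F y * pd j F y) x := by
  simp only [Finset.mul_sum, ← Finset.sum_add_distrib]
  refine Finset.sum_congr rfl fun j _ => ?_
  have sUi := sU i
  have sUj := sU j
  rw [pd_lin3 j (a := fun y => R y * U i y * U j y)
    (b := fun y => U i y * pd j H y + pd i H y * U j y)
    (k := fun y => R y * pd i F y * pd j F y) 1 c (c ^ 2) x
    (by intro y; rw [hHF, hHF]; ring) (by fun_prop) (by fun_prop) (by fun_prop)]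
  ring

theorem L2 {d : ℕ} (i : Fin d) {H F : (Fin d → ℝ) → ℝ} {U : Fin d → (Fin d → ℝ) → ℝ} (c : ℝ)
    (x : Fin d → ℝ) (sH : ContDiff ℝ (⊤ : ℕ∞) H)
    (sF : ContDiff ℝ (⊤ : ℕ∞) F) (sU : ∀ j, ContDiff ℝ (⊤ : ℕ∞) (U j)) :
    ∑ j, pd j (fun y => pd j (fun z => H z * (U i z + c * pd i F z)) y) x
      = ∑ j, pd j (fun y => pd j (fun z => H z * U i z) y) x
        + c * ∑ j, pd j (fun y => pd j (fun z => H z * pd i F z) y) x := by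
  simp only [Finset.mul_sum, ← Finset.sum_add_distrib]
  refine Finset.sum_congr rfl fun j _ => ?_
  have sUi := sU i
  rw [pd_lin2 j (a := fun y => pd j (fun z => H z * U i z) y)
    (b := fun y => pd j (fun z => H z * pd i F z) y) 1 c x _ (by fun_prop) (by fun_prop)]
  · ring
  · intro y
    exact pd_lin2 j 1 c y (by intro z; ring) (by fun_prop) (by fun_prop)

theorem L0 {d : ℕ} (i j : Fin d) {F : (Fin d → ℝ) → ℝ} {U : Fin d → (Fin d → ℝ) → ℝ} (c : ℝ)
    (y : Fin d → ℝ)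
    (sF : ContDiff ℝ (⊤ : ℕ∞) F) (sU : ∀ j, ContDiff ℝ (⊤ : ℕ∞) (U j)) :
    pd j (fun z => U i z + c * pd i F z) y
     = pd j (U i) y + c * pd j (fun z => pd i F z) y := by
  have sUi := sU i
  rw [pd_lin2 j (a := U i) (b := fun z => pd i F z) 1 c y (by intro z; ring)
    (by fun_prop) (by fun_prop)]
  ring

theorem L3 {d : ℕ} (i : Fin d) {H F : (Fin d → ℝ) → ℝ} {U : Fin d → (Fin d → ℝ) → ℝ} (c : ℝ)
    (x : Fin d → ℝ) (sH : ContDiff ℝ (⊤ : ℕ∞) H)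
    (sF : ContDiff ℝ (⊤ : ℕ∞) F) (sU : ∀ j, ContDiff ℝ (⊤ : ℕ∞) (U j)) :
    ∑ j, pd j (fun y => H y * ((pd j (fun z => U i z + c * pd i F z) y
        + pd i (fun z => U j z + c * pd j F z) y) / 2)) x
      = ∑ j, pd j (fun y => H y * ((pd j (U i) y + pd i (U j) y) / 2)) x
        + c * ∑ j, pd j (fun y => H y * pd j (fun z => pd i F z) y) x := by
  simp only [Finset.mul_sum, ← Finset.sum_add_distrib]
  refine Finset.sum_congr rfl fun j _ => ?_
  have sUi := sU i
  have sUj := sU j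
  rw [pd_lin2 j (a := fun y => H y * ((pd j (U i) y + pd i (U j) y) / 2))
    (b := fun y => H y * pd j (fun z => pd i F z) y) 1 c x _ (by fun_prop) (by fun_prop)]
  · ring
  · intro y
    rw [L0 i j c y sF sU, L0 j i c y sF sU, pd_comm i j y sF]
    ring

theorem L4 {d : ℕ} (i : Fin d) {G F : (Fin d → ℝ) → ℝ} {U : Fin d → (Fin d → ℝ) → ℝ} (c : ℝ)
    (x : Fin d → ℝ) (sG : ContDiff ℝ (⊤ : ℕ∞) G)
    (sF : ContDiff ℝ (⊤ : ℕ∞) F) (sU : ∀ j, ContDiff ℝ (⊤ : ℕ∞) (U j)) :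
    pd i (fun y => G y * ∑ j, pd j (fun z => U j z + c * pd j F z) y) x
      = pd i (fun y => G y * ∑ j, pd j (U j) y) x
        + c * pd i (fun y => G y * ∑ j, pd j (fun z => pd j F z) y) x := by
  rw [pd_lin2 i (a := fun y => G y * ∑ j, pd j (U j) y)
    (b := fun y => G y * ∑ j, pd j (fun z => pd j F z) y) 1 c x _ (by fun_prop) (by fun_prop)]
  · ring
  · intro y
    simp only [L0 _ _ c y sF sU, Finset.sum_add_distrib, ← Finset.mul_sum]
    ring

theorem L5 {d : ℕ} (i : Fin d) {H : (Fin d → ℝ) → ℝ} {U : Fin d → (Fin d → ℝ) → ℝ}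
    (x : Fin d → ℝ) (sH : ContDiff ℝ (⊤ : ℕ∞) H) (sU : ∀ j, ContDiff ℝ (⊤ : ℕ∞) (U j)) :
    ∑ j, pd j (fun y => U i y * pd j H y + pd i H y * U j y) x
      = ∑ j, pd i (fun y => pd j (fun z => H z * U j z) y) x
        + ∑ j, pd j (fun y => pd j (fun z => H z * U i z) y) x
        - 2 * ∑ j, pd j (fun y => H y * ((pd j (U i) y + pd i (U j) y) / 2)) x := by
  simp only [Finset.mul_sum, ← Finset.sum_add_distrib, ← Finset.sum_sub_distrib]
  refine Finset.sum_congr rfl fun j _ => ?_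
  have sUi := sU i
  have sUj := sU j
  rw [pd_comm i j x (f := fun z => H z * U j z) (by fun_prop)]
  rw [pd_lin3 j (a := fun y => pd i (fun z => H z * U j z) y)
    (b := fun y => pd j (fun z => H z * U i z) y)
    (k := fun y => H y * ((pd j (U i) y + pd i (U j) y) / 2)) 1 1 (-2) x _
    (by fun_prop) (by fun_prop) (by fun_prop)]
  · ring
  · intro y
    rw [pd_mul' i y sH sUj, pd_mul' j y sH sUi]
    ring

theorem L6 {d : ℕ} (i : Fin d) {R H F : (Fin d → ℝ) → ℝ}
    (x : Fin d → ℝ) (sR : ContDiff ℝ (⊤ : ℕ∞) R) (sH : ContDiff ℝ (⊤ : ℕ∞) H)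
    (sF : ContDiff ℝ (⊤ : ℕ∞) F) (hHF : ∀ j y, pd j H y = R y * pd j F y) :
    ∑ j, pd j (fun y => pd j (fun z => H z * pd i F z) y) x
      = ∑ j, pd j (fun y => R y * pd i F y * pd j F y) x
        + ∑ j, pd j (fun y => H y * pd j (fun z => pd i F z) y) x := by
  simp only [← Finset.sum_add_distrib]
  refine Finset.sum_congr rfl fun j _ => ?_
  rw [pd_lin2 j (a := fun y => R y * pd i F y * pd j F y)
    (b := fun y => H y * pd j (fun z => pd i F z) y) 1 1 x _
    (by fun_prop) (by fun_prop)]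
  · ring
  · intro y
    rw [pd_mul' j y sH (g := fun z => pd i F z) (by fun_prop), hHF]
    ring

theorem L7 {d : ℕ} (i : Fin d) {R A H F : (Fin d → ℝ) → ℝ}
    (x : Fin d → ℝ) (sR : ContDiff ℝ (⊤ : ℕ∞) R) (sA : ContDiff ℝ (⊤ : ℕ∞) A)
    (sH : ContDiff ℝ (⊤ : ℕ∞) H)
    (sF : ContDiff ℝ (⊤ : ℕ∞) F) (hHF : ∀ j y, pd j H y = R y * pd j F y)
    (hHA : ∀ j y, pd j H y = A y * pd j R y) (hR : ∀ y, 0 < R y) :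
    ∑ j, pd j (fun y => H y * pd j (fun z => pd i F z) y) x
      + pd i (fun y => (R y * A y - H y) * ∑ j, pd j (fun z => pd j F z) y) x
     = 2 * R x * pd i (fun y => A y *
        (∑ j, pd j (fun z => A z * pd j (fun w => Real.sqrt (R w)) z) y) / Real.sqrt (R y)) x := by
  have sS : ContDiff ℝ (⊤ : ℕ∞) (fun w => Real.sqrt (R w)) := sR.sqrt (fun y => (hR y).ne')
  have hAS : ∀ j y, A y * pd j (fun w => Real.sqrt (R w)) y = (1 / 2) * (√(R y) * pd j F y) := by
    intro j y
    rw [pd_chain j y (Real.hasDerivAt_sqrt (hR y).ne') sR]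
    have h1 := hHF j y
    rw [hHA] at h1
    have hp : 0 < √(R y) := Real.sqrt_pos.2 (hR y)
    have hq : √(R y) ^ 2 = R y := Real.sq_sqrt (hR y).le
    field_simp
    rw [h1, hq]
  have hK : ∀ y, A y * (∑ j, pd j (fun z => A z * pd j (fun w => Real.sqrt (R w)) z) y) / √(R y)
      = (1 / 2) * (A y * ∑ j, pd j (fun z => pd j F z) y)
        + (1 / 4) * ∑ j, pd j F y * pd j F y := by
    intro y
    have hp : 0 < √(R y) := Real.sqrt_pos.2 (hR y)
    simp only [hAS]
    rw [mul_div_right_comm, Finset.mul_sum, Finset.mul_sum, Finset.mul_sum, Finset.mul_sum,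
      ← Finset.sum_add_distrib]
    refine Finset.sum_congr rfl fun j _ => ?_
    rw [pd_lin2 j (a := fun z => √(R z) * pd j F z) (b := fun z => √(R z) * pd j F z) (1/2) 0 y
      (by intro z; ring) (by fun_prop) (by fun_prop),
      pd_mul' j y sS (g := fun z => pd j F z) (by fun_prop)]
    have h2 := hAS j y
    field_simp
    linear_combination 4 * pd j F y * h2
  rw [pd_lin2 i (1/2) (1/4) x hK (by fun_prop) (by fun_prop)]
  rw [pd_mul' i x (f := fun y => R y * A y - H y) (by fun_prop) (by fun_prop)]
  rw [pd_mul' i x (f := A) (by fun_prop) (by fun_prop)]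
  rw [pd_lin2 i (f := fun y => R y * A y - H y) (a := fun y => R y * A y) (b := H) 1 (-1) x
    (by intro y; ring) (by fun_prop) (by fun_prop), pd_mul' i x sR sA]
  rw [pd_sum' i (f := fun j y => pd j (fun z => pd j F z) y) x (by intro j; fun_prop)]
  rw [pd_sum' i (f := fun j y => pd j F y * pd j F y) x (by intro j; fun_prop)]
  have e1 : ∀ j, pd j (fun y => H y * pd j (fun z => pd i F z) y) x
      = R x * (pd j F x * pd i (fun z => pd j F z) x)
        + H x * pd i (fun y => pd j (fun z => pd j F z) y) x := by
    intro j
    rw [pd_mul' j x sH (by fun_prop), hHF, pd_comm j i x sF,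
      pd_comm i j x (f := fun z => pd j F z) (by fun_prop)]
    have : (pd j fun z => pd i F z) = fun y => pd i (fun z => pd j F z) y :=
      funext fun y => pd_comm j i y sF
    rw [this]
    ring
  have e2 : ∀ j, pd i (fun y => pd j F y * pd j F y) x
      = 2 * (pd j F x * pd i (fun z => pd j F z) x) := by
    intro j
    rw [pd_mul' i x (f := fun y => pd j F y) (by fun_prop) (by fun_prop)]
    ring
  simp only [e1, e2, Finset.sum_add_distrib, ← Finset.mul_sum]
  rw [hHA]
  ring

/-- the time derivative term -/
theorem L8 {d : ℕ} (i : Fin d) {R A H : (Fin d → ℝ) → ℝ} {U : Fin d → (Fin d → ℝ) → ℝ}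
    (x : Fin d → ℝ) (sR : ContDiff ℝ (⊤ : ℕ∞) R) (sA : ContDiff ℝ (⊤ : ℕ∞) A)
    (sH : ContDiff ℝ (⊤ : ℕ∞) H) (sU : ∀ j, ContDiff ℝ (⊤ : ℕ∞) (U j))
    (hHA : ∀ j y, pd j H y = A y * pd j R y) :
    pd i (fun y => A y * (-∑ j, pd j (fun z => R z * U j z) y)) x
     = - ∑ j, pd i (fun y => pd j (fun z => H z * U j z) y) x
       - pd i (fun y => (R y * A y - H y) * ∑ j, pd j (U j) y) x := by
  rw [← pd_sum' i (f := fun j y => pd j (fun z => H z * U j z) y) x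
    (by intro j; have := sU j; fun_prop)]
  have sU' : ∀ j, ContDiff ℝ (⊤ : ℕ∞) (fun z => H z * U j z) := by
    intro j; have := sU j; fun_prop
  rw [pd_lin2 i (a := fun y => ∑ j, pd j (fun z => H z * U j z) y)
    (b := fun y => (R y * A y - H y) * ∑ j, pd j (U j) y) (-1) (-1) x _
    (by fun_prop) (by fun_prop)]
  · ring
  · intro y
    rw [← Finset.sum_neg_distrib, Finset.mul_sum, Finset.mul_sum, Finset.mul_sum, Finset.mul_sum,
      ← Finset.sum_add_distrib]
    refine Finset.sum_congr rfl fun j _ => ?_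
    rw [pd_mul' j y sR (sU j), pd_mul' j y sH (sU j), hHA]
    ring

theorem hfun_smooth (ε γ : ℝ) : ContDiffOn ℝ (⊤ : ℕ∞) (hfun ε γ) (Set.Ioi 0) := by
  intro r hr
  have hr' : r ≠ 0 := ne_of_gt hr
  apply ContDiffAt.contDiffWithinAt
  unfold hfun
  have h1 : ContDiffAt ℝ (⊤ : ℕ∞) (fun r : ℝ => r ^ ((7 : ℝ) / 8)) r :=
    Real.contDiffAt_rpow_const_of_ne hr'
  have h2 : ContDiffAt ℝ (⊤ : ℕ∞) (fun r : ℝ => r ^ γ) r :=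
    Real.contDiffAt_rpow_const_of_ne hr'
  fun_prop

theorem hfun'_smooth (ε γ : ℝ) : ContDiffOn ℝ (⊤ : ℕ∞) (deriv (hfun ε γ)) (Set.Ioi 0) :=
  (hfun_smooth ε γ).deriv_of_isOpen isOpen_Ioi (by simp)

theorem statement7 (d : ℕ) (hd : 1 ≤ d) (ε γ ν κ T c : ℝ)
    (hε : 0 < ε) (hγ : 1 < γ) (hκ : 0 < κ) (hνκ : κ < ν) (hT : 0 < T) (hc : 0 < c)
    (P Φ : ℝ → ℝ) (hP : IsPeps ε γ ν κ P) (hΦ : IsPhieps ε γ Φ)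
    (ρ : ℝ → (Fin d → ℝ) → ℝ) (u : ℝ → (Fin d → ℝ) → (Fin d → ℝ))
    (hsol : IsQNSSol d ε γ ν κ T P ρ u)
    (v : ℝ → (Fin d → ℝ) → (Fin d → ℝ))
    (hv : ∀ s y i, v s y i = u s y i + c * grad (fun z => Φ (ρ s z)) y i) :
    ∀ t ∈ Set.Ioo 0 T, ∀ x : Fin d → ℝ,
      (deriv (fun s => ρ s x) t + dvg (fun y => ρ t y • v t y) x
        = c * lap (fun y => hfun ε γ (ρ t y)) x)
      ∧
      (∀ i : Fin d,
        deriv (fun s => ρ s x * v s x i) t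
          + dvgM (fun y i' j => ρ t y * v t y i' * v t y j) x i
          + grad (fun y => ρ t y ^ γ) x i
          + (muof ν κ - c) / muof ν κ * grad (fun y => P (ρ t y)) x i
          - c * lap (fun y => hfun ε γ (ρ t y) * v t y i) x
          + ptil ε (ρ t x) * v t x i
          - 2 * (ν - c) * dvgM (fun y i' j => hfun ε γ (ρ t y) * symD (v t) y i' j) x i
          - (2 * ν - c) * grad (fun y => gfun ε γ (ρ t y) * dvg (v t) y) x i
          - 2 * (κ ^ 2 - 2 * ν * c + c ^ 2) * ρ t x * Kvec ε γ (ρ t) x i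
        = 0) := by
  obtain ⟨hρ, hu, hpos, -, -, hcont, hmom⟩ := hsol
  intro t ht x
  have hnb : ∀ s ∈ Set.Ioo 0 T, ∀ y : Fin d → ℝ,
      (Set.Icc 0 T ×ˢ (Set.univ : Set (Fin d → ℝ))) ∈ nhds (s, y) := by
    intro s hs y
    exact prod_mem_nhds (Icc_mem_nhds hs.1 hs.2) Filter.univ_mem
  have hρa : ∀ s ∈ Set.Ioo 0 T, ∀ y : Fin d → ℝ,
      ContDiffAt ℝ (⊤ : ℕ∞) (fun p : ℝ × (Fin d → ℝ) => ρ p.1 p.2) (s, y) :=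
    fun s hs y => hρ.contDiffAt (hnb s hs y)
  have hua : ∀ s ∈ Set.Ioo 0 T, ∀ y : Fin d → ℝ,
      ContDiffAt ℝ (⊤ : ℕ∞) (fun p : ℝ × (Fin d → ℝ) => u p.1 p.2) (s, y) :=
    fun s hs y => hu.contDiffAt (hnb s hs y)
  have sRs : ∀ s ∈ Set.Ioo 0 T, ContDiff ℝ (⊤ : ℕ∞) (ρ s) := by
    intro s hs
    rw [contDiff_iff_contDiffAt]
    intro y
    exact (hρa s hs y).comp y (f := fun y : Fin d → ℝ => (s, y)) (by fun_prop)
  have sR := sRs t ht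
  have sU : ∀ j, ContDiff ℝ (⊤ : ℕ∞) (fun y => u t y j) := by
    intro j
    have : ContDiff ℝ (⊤ : ℕ∞) (u t) := by
      rw [contDiff_iff_contDiffAt]
      intro y
      exact (hua t ht y).comp y (f := fun y : Fin d → ℝ => (t, y)) (by fun_prop)
    exact contDiff_pi.1 this j
  have comp_s : ∀ f : ℝ → ℝ, ContDiffOn ℝ (⊤ : ℕ∞) f (Set.Ioi 0) → ∀ s ∈ Set.Ioo 0 T,
      ContDiff ℝ (⊤ : ℕ∞) (fun y => f (ρ s y)) := by
    intro f hf s hs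
    rw [contDiff_iff_contDiffAt]
    intro y
    exact (hf.contDiffAt (Ioi_mem_nhds (hpos s y))).comp y (sRs s hs).contDiffAt
  have hhd : ∀ r : ℝ, 0 < r → HasDerivAt (hfun ε γ) (deriv (hfun ε γ) r) r := fun r hr =>
    (((hfun_smooth ε γ).contDiffAt (Ioi_mem_nhds hr)).differentiableAt (by simp)).hasDerivAt
  have hΦd : ∀ r : ℝ, 0 < r → HasDerivAt Φ (deriv Φ r) r := fun r hr =>
    ((hΦ.1.contDiffAt (Ioi_mem_nhds hr)).differentiableAt (by simp)).hasDerivAt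
  have sH := comp_s _ (hfun_smooth ε γ) t ht
  have sA := comp_s _ (hfun'_smooth ε γ) t ht
  have sF := comp_s _ hΦ.1 t ht
  have hHA : ∀ s ∈ Set.Ioo 0 T, ∀ j y, pd j (fun y => hfun ε γ (ρ s y)) y
      = deriv (hfun ε γ) (ρ s y) * pd j (ρ s) y := fun s hs j y =>
    pd_chain j y (hhd _ (hpos s y)) (sRs s hs)
  have hHF : ∀ s ∈ Set.Ioo 0 T, ∀ j y, pd j (fun y => hfun ε γ (ρ s y)) y
      = ρ s y * pd j (fun y => Φ (ρ s y)) y := by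
    intro s hs j y
    rw [hHA s hs, pd_chain j y (hΦd _ (hpos s y)) (sRs s hs), ← hΦ.2 _ (hpos s y)]
    ring
  have hcont' : ∀ y, deriv (fun s => ρ s y) t = -∑ j, pd j (fun z => ρ t z * u t z j) y := by
    intro y
    have := hcont t ht y
    simp only [dvg, Pi.smul_apply, smul_eq_mul] at this
    linarith
  have hρt : ∀ y, HasDerivAt (fun s => ρ s y) (deriv (fun s => ρ s y) t) t := by
    intro y
    have : ContDiffAt ℝ (⊤ : ℕ∞) (fun s => ρ s y) t :=
      (hρa t ht y).comp t (f := fun s : ℝ => (s, y)) (by fun_prop)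
    exact (this.differentiableAt (by simp)).hasDerivAt
  constructor
  · simp only [dvg, lap, Pi.smul_apply, smul_eq_mul, hv, grad]
    rw [hcont', Finset.mul_sum, neg_add_eq_sub, ← Finset.sum_sub_distrib]
    refine Finset.sum_congr rfl fun j _ => ?_
    have sUj := sU j
    rw [pd_lin2 j (a := fun z => ρ t z * u t z j)
      (b := fun z => pd j (fun y => hfun ε γ (ρ t y)) z) 1 c x _ (by fun_prop) (by fun_prop)]
    · ring
    · intro y
      rw [hHF t ht]; ring
  · intro i
    have hm := hmom t ht x i
    have hW : ∀ s ∈ Set.Ioo 0 T, ∀ y : Fin d → ℝ, ContDiffAt ℝ (⊤ : ℕ∞)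
        (fun p : ℝ × (Fin d → ℝ) => hfun ε γ (ρ p.1 p.2)) (s, y) := by
      intro s hs y
      exact ((hfun_smooth ε γ).contDiffAt (Ioi_mem_nhds (hpos s y))).comp (s, y) (hρa s hs y)
    have hsw := time_swap i x hW ht
    simp only at hsw
    have hht : ∀ y, deriv (fun s => hfun ε γ (ρ s y)) t
        = deriv (hfun ε γ) (ρ t y) * (-∑ j, pd j (fun z => ρ t z * u t z j) y) := by
      intro y
      rw [← hcont']
      exact ((hhd _ (hpos t y)).comp t (hρt y)).deriv
    simp only [hht] at hsw
    rw [L8 i x sR sA sH sU (hHA t ht)] at hsw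
    have hut : DifferentiableAt ℝ (fun s => u s x i) t := by
      have : ContDiffAt ℝ (⊤ : ℕ∞) (fun s => u s x) t :=
        (hua t ht x).comp t (f := fun s : ℝ => (s, x)) (by fun_prop)
      exact (contDiffAt_pi.1 this i).differentiableAt (by simp)
    have hdt : deriv (fun s => ρ s x * v s x i) t = deriv (fun s => ρ s x * u s x i) t
        + c * (-∑ j, pd i (fun y => pd j (fun z => hfun ε γ (ρ t z) * u t z j) y) x -
          pd i (fun y => (ρ t y * deriv (hfun ε γ) (ρ t y) - hfun ε γ (ρ t y))
            * ∑ j, pd j (fun y => u t y j) y) x) := by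
      have h1 := ((hρt x).differentiableAt.mul hut).hasDerivAt.add (hsw.const_mul c)
      refine HasDerivAt.deriv (h1.congr_of_eventuallyEq ?_)
      filter_upwards [isOpen_Ioo.mem_nhds ht] with s hs
      simp only [Pi.add_apply, Pi.mul_apply]
      rw [hv, hHF s hs]
      simp only [grad]
      ring
    rw [hdt]
    have hμ : muof ν κ ≠ 0 := by
      unfold muof
      have hν : 0 < ν := hκ.trans hνκ
      have : √(ν ^ 2 - κ ^ 2) < ν := by
        rw [Real.sqrt_lt' hν]
        nlinarith
      linarith
    have hPg : pd i (fun y => P (ρ t y)) x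
        = muof ν κ * ptil ε (ρ t x) * pd i (fun y => Φ (ρ t y)) x := by
      rw [pd_chain i x (hP _ (hpos t x)) sR, pd_chain i x (hΦd _ (hpos t x)) sR,
        ← hΦ.2 _ (hpos t x)]
      have := (hpos t x).ne'
      field_simp
    have hgP : pd i (fun y => ρ t y ^ γ + P (ρ t y)) x
        = pd i (fun y => ρ t y ^ γ) x + pd i (fun y => P (ρ t y)) x := by
      have h1 : HasDerivAt (fun r : ℝ => r ^ γ) _ (ρ t x) :=
        Real.hasDerivAt_rpow_const (p := γ) (Or.inl (hpos t x).ne')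
      have h2 := hP _ (hpos t x)
      rw [pd_chain i x h1 sR, pd_chain i x h2 sR,
        pd_chain i x (f := fun r => r ^ γ + P r) (h1.add h2) sR]
      ring
    have l1 := L1 i c x sR sH sF sU (hHF t ht)
    have l2 := L2 i c x sH sF sU
    have l3 := L3 i c x sH sF sU
    have l4 := L4 i (G := fun y => ρ t y * deriv (hfun ε γ) (ρ t y) - hfun ε γ (ρ t y)) c x
      (by fun_prop) sF sU
    have l5 := L5 i x sH sU
    have l6 := L6 i x sR sH sF (hHF t ht)
    have l7 := L7 i x sR sA sH sF (hHF t ht) (hHA t ht) (hpos t)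
    simp only [dvgM, grad, lap, symD, jac, dvg, gfun, Kvec, hv, Pi.smul_apply, smul_eq_mul,
      hgP] at hm ⊢
    rw [l1, l2, l3, l4]
    have hμ2 : (muof ν κ - c) / muof ν κ * pd i (fun y => P (ρ t y)) x
        = pd i (fun y => P (ρ t y)) x - c * ptil ε (ρ t x) * pd i (fun y => Φ (ρ t y)) x := by
      rw [hPg]; field_simp
    rw [hμ2]
    linear_combination hm + c * l5 - c ^ 2 * l6 + (c ^ 2 - 2 * ν * c) * l7

end
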